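/- arXiv:2205.15978 — 11 statements merged into one kernel-verified Lean document; each statement's English description precedes it below -/
import Mathlib

section
/- Let s : (0,π) → ℝ be continuous with θ ↦ s(θ)/sin θ locally integrable, let C₁, C₂ ∈ ℝ, fix θ₀, θ₁ ∈ (0,π), and define r(θ) = C₂·cos θ + C₁ + ∫_{θ₀}^{θ} sin φ·(∫_{θ₁}^{φ} s(ψ)/sin ψ dψ) dφ. Then r is twice continuously differentiable on (0,π) and r''(θ) + r(θ) − (r'(θ)·cot θ + r(θ)) = s(θ) for all θ ∈ (0,π); that is, the surface with support function r has astigmatism s. -/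
open Real Set MeasureTheory intervalIntegral

/-- Fundamental theorem of calculus on `(0,π)` for a function continuous there. -/
theorem hasDerivAt_integral_Ioo (g : ℝ → ℝ) (hg : ContinuousOn g (Set.Ioo 0 π))
    (a θ : ℝ) (ha : a ∈ Set.Ioo 0 π) (hθ : θ ∈ Set.Ioo 0 π) :
    HasDerivAt (fun x => ∫ t in a..x, g t) (g θ) θ := by
  have hsub : Set.uIcc a θ ⊆ Set.Ioo 0 π := Set.OrdConnected.uIcc_subset inferInstance ha hθ
  refine intervalIntegral.integral_hasDerivAt_right
    (hg.mono hsub).intervalIntegrable ?_ (hg.continuousAt (isOpen_Ioo.mem_nhds hθ))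
  exact hg.stronglyMeasurableAtFilter isOpen_Ioo θ hθ

/-- If `r(θ) = C₂·cos θ + C₁ + ∫_{θ₀}^{θ} sin φ·(∫_{θ₁}^{φ} s(ψ)/sin ψ dψ) dφ`
then `r` is `C²` on `(0,π)` and the surface with support function `r` has
astigmatism `s`, i.e. `r₂ − r₁ = s` where `r₁ = r'·cot θ + r`, `r₂ = r'' + r`. -/
theorem support_function_from_quadrature
    (s : ℝ → ℝ) (hs : ContinuousOn s (Set.Ioo 0 π))
    (hloc : LocallyIntegrableOn (fun θ => s θ / Real.sin θ) (Set.Ioo 0 π))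
    (C₁ C₂ θ₀ θ₁ : ℝ) (hθ₀ : θ₀ ∈ Set.Ioo 0 π) (hθ₁ : θ₁ ∈ Set.Ioo 0 π)
    (r : ℝ → ℝ)
    (hr : ∀ θ, r θ = C₂ * Real.cos θ + C₁ +
        ∫ φ in θ₀..θ, Real.sin φ * ∫ ψ in θ₁..φ, s ψ / Real.sin ψ) :
    ContDiffOn ℝ 2 r (Set.Ioo 0 π) ∧
      ∀ θ ∈ Set.Ioo 0 π,
        (deriv (deriv r) θ + r θ) - (deriv r θ * (Real.cos θ / Real.sin θ) + r θ) = s θ := by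
  have hsin : ∀ θ ∈ Set.Ioo 0 π, Real.sin θ ≠ 0 := fun θ h =>
    (Real.sin_pos_of_pos_of_lt_pi h.1 h.2).ne'
  set F : ℝ → ℝ := fun φ => ∫ ψ in θ₁..φ, s ψ / Real.sin ψ with hF
  have hFd : ∀ θ ∈ Set.Ioo 0 π, HasDerivAt F (s θ / Real.sin θ) θ := fun θ h =>
    hasDerivAt_integral_Ioo (fun ψ => s ψ / Real.sin ψ)
      (hs.div Real.continuous_sin.continuousOn hsin) θ₁ θ hθ₁ h
  have hFc : ContinuousOn F (Set.Ioo 0 π) := fun θ h =>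
    (hFd θ h).continuousAt.continuousWithinAt
  have hr' : r = fun θ => C₂ * Real.cos θ + C₁ + ∫ φ in θ₀..θ, Real.sin φ * F φ := funext hr
  have h1 : ∀ θ ∈ Set.Ioo 0 π, HasDerivAt r (C₂ * (-Real.sin θ) + Real.sin θ * F θ) θ := by
    intro θ h
    rw [hr']
    exact (((Real.hasDerivAt_cos θ).const_mul C₂).add_const C₁).add
      (hasDerivAt_integral_Ioo (fun φ => Real.sin φ * F φ)
        (Real.continuous_sin.continuousOn.mul hFc) θ₀ θ hθ₀ h)
  have h2 : ∀ θ ∈ Set.Ioo 0 π,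
      HasDerivAt (deriv r) (C₂ * (-Real.cos θ) + (Real.cos θ * F θ + s θ)) θ := by
    intro θ h
    have key : HasDerivAt (fun θ => C₂ * (-Real.sin θ) + Real.sin θ * F θ)
        (C₂ * (-Real.cos θ) + (Real.cos θ * F θ + Real.sin θ * (s θ / Real.sin θ))) θ :=
      ((Real.hasDerivAt_sin θ).neg.const_mul C₂).add ((Real.hasDerivAt_sin θ).mul (hFd θ h))
    rw [mul_div_cancel₀ _ (hsin θ h)] at key
    refine key.congr_of_eventuallyEq ?_
    filter_upwards [isOpen_Ioo.mem_nhds h] with x hx using (h1 x hx).deriv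
  refine ⟨?_, ?_⟩
  · rw [show (2 : WithTop ℕ∞) = 1 + 1 by norm_num,
      contDiffOn_succ_iff_deriv_of_isOpen isOpen_Ioo]
    refine ⟨fun x hx => (h1 x hx).differentiableAt.differentiableWithinAt, by simp, ?_⟩
    rw [show (1 : WithTop ℕ∞) = 0 + 1 by norm_num,
      contDiffOn_succ_iff_deriv_of_isOpen isOpen_Ioo]
    refine ⟨fun x hx => (h2 x hx).differentiableAt.differentiableWithinAt, by simp, ?_⟩
    rw [contDiffOn_zero]
    have hc : ContinuousOn (fun θ => C₂ * (-Real.cos θ) + (Real.cos θ * F θ + s θ))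
        (Set.Ioo 0 π) := by fun_prop
    exact hc.congr fun x hx => (h2 x hx).deriv
  · intro θ h
    rw [(h2 θ h).deriv, (h1 θ h).deriv]
    have := hsin θ h
    field_simp
    ring
end

section
/- Let δ ∈ (0,π/2), let r₁, r₂ : (0,δ] → ℝ be continuously differentiable with s := r₂ − r₁ nowhere zero on (0,δ], and suppose the derived Codazzi–Mainardi equation r₁'(θ) = s(θ)·cot θ holds on (0,δ]. Then for every α ∈ ℝ and every θ ∈ (0,δ]: |s(θ)/sin^α θ| = |s(δ)/sin^α δ| · exp(∫_θ^δ cot φ · (α + 1 − r₂'(φ)/r₁'(φ)) dφ). -/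
open Real Set

/-- Integral formula for the astigmatism: under the derived Codazzi–Mainardi equation,
for every `α` and every `θ ∈ (0,δ]`,
`|s(θ)/sin^α θ| = |s(δ)/sin^α δ|·exp(∫_θ^δ cot φ·(α+1 − r₂'/r₁') dφ)`. -/
theorem astigmatism_integral_formula
    (δ : ℝ) (hδ : δ ∈ Set.Ioo 0 (π/2))
    (r₁ r₂ r₁' r₂' : ℝ → ℝ)
    (hd₁ : ∀ θ ∈ Set.Ioc 0 δ, HasDerivAt r₁ (r₁' θ) θ)
    (hd₂ : ∀ θ ∈ Set.Ioc 0 δ, HasDerivAt r₂ (r₂' θ) θ)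
    (hc₁ : ContinuousOn r₁' (Set.Ioc 0 δ))
    (hc₂ : ContinuousOn r₂' (Set.Ioc 0 δ))
    (hsne : ∀ θ ∈ Set.Ioc 0 δ, r₂ θ - r₁ θ ≠ 0)
    (hCM : ∀ θ ∈ Set.Ioc 0 δ, r₁' θ = (r₂ θ - r₁ θ) * (Real.cos θ / Real.sin θ)) :
    ∀ (α : ℝ), ∀ θ ∈ Set.Ioc 0 δ,
      |(r₂ θ - r₁ θ) / Real.sin θ ^ α| =
        |(r₂ δ - r₁ δ) / Real.sin δ ^ α| *
          Real.exp (∫ φ in θ..δ, (Real.cos φ / Real.sin φ) * (α + 1 - r₂' φ / r₁' φ)) := by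
  intro α θ hθ
  have hsub : ∀ φ ∈ Set.uIcc θ δ, φ ∈ Set.Ioc 0 δ := by
    intro φ hφ
    rw [Set.uIcc_of_le hθ.2] at hφ
    exact ⟨lt_of_lt_of_le hθ.1 hφ.1, hφ.2⟩
  have hsin : ∀ φ ∈ Set.Ioc 0 δ, 0 < Real.sin φ := fun φ hφ =>
    Real.sin_pos_of_pos_of_lt_pi hφ.1 (by linarith [hφ.2, hδ.2, Real.pi_pos])
  have hcos : ∀ φ ∈ Set.Ioc 0 δ, 0 < Real.cos φ := fun φ hφ =>
    Real.cos_pos_of_mem_Ioo ⟨by linarith [hφ.1, Real.pi_pos], by linarith [hφ.2, hδ.2]⟩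
  have hr1 : ∀ φ ∈ Set.Ioc 0 δ, r₁' φ ≠ 0 := fun φ hφ => by
    rw [hCM φ hφ]
    exact mul_ne_zero (hsne φ hφ) (div_pos (hcos φ hφ) (hsin φ hφ)).ne'
  have hder : ∀ φ ∈ Set.uIcc θ δ,
      HasDerivAt (fun x => α * Real.log (Real.sin x) - Real.log (r₂ x - r₁ x))
        ((Real.cos φ / Real.sin φ) * (α + 1 - r₂' φ / r₁' φ)) φ := by
    intro φ hφ
    have h := hsub φ hφ
    have h1 := ((Real.hasDerivAt_sin φ).log (hsin φ h).ne').const_mul α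
    have h2 := ((hd₂ φ h).sub (hd₁ φ h)).log (hsne φ h)
    refine (h1.sub h2).congr_deriv ?_
    have a := hsne φ h
    have b := (hsin φ h).ne'
    have c := (hcos φ h).ne'
    simp only [Pi.sub_apply]
    rw [hCM φ h]
    field_simp
    ring
  have hcont : ContinuousOn
      (fun φ => (Real.cos φ / Real.sin φ) * (α + 1 - r₂' φ / r₁' φ)) (Set.uIcc θ δ) := by
    have hs : Set.uIcc θ δ ⊆ Set.Ioc 0 δ := hsub
    refine ContinuousOn.mul (Real.continuous_cos.continuousOn.div
      Real.continuous_sin.continuousOn fun φ h => (hsin φ (hs h)).ne') ?_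
    exact continuousOn_const.sub
      ((hc₂.mono hs).div (hc₁.mono hs) fun φ h => hr1 φ (hs h))
  have key : ∀ φ ∈ Set.Ioc 0 δ, |(r₂ φ - r₁ φ) / Real.sin φ ^ α| =
      Real.exp (-(α * Real.log (Real.sin φ) - Real.log (r₂ φ - r₁ φ))) := by
    intro φ h
    rw [abs_div, abs_of_pos (Real.rpow_pos_of_pos (hsin φ h) α), neg_sub, Real.exp_sub,
      Real.exp_log_eq_abs (hsne φ h), Real.rpow_def_of_pos (hsin φ h), mul_comm α]
  rw [intervalIntegral.integral_eq_sub_of_hasDerivAt hder hcont.intervalIntegrable,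
    key θ hθ, key δ ⟨hδ.1, le_rfl⟩, ← Real.exp_add]
  congr 1
  ring
end

section
/- Let δ ∈ (0,π/2), let r₁, r₂ : (0,δ] → ℝ be continuously differentiable with s := r₂ − r₁ nowhere zero on (0,δ], suppose the derived Codazzi–Mainardi equation r₁'(θ) = s(θ)·cot θ holds on (0,δ], and suppose the umbilic slope μ₀ = lim_{θ→0} r₂'(θ)/r₁'(θ) exists. If μ₀ > α + 1 for some α ∈ ℝ, then lim_{θ→0} s(θ)/sin^α θ = 0. -/
open Real Set Filter Topology

/-- If the umbilic slope `μ₀ = lim_{θ→0} r₂'/r₁'` exists and `μ₀ > α + 1`,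
then `s/sin^α θ → 0` as `θ → 0`. -/
theorem slope_gt_implies_vanishing
    (δ : ℝ) (hδ : δ ∈ Set.Ioo 0 (π/2))
    (r₁ r₂ r₁' r₂' : ℝ → ℝ)
    (hd₁ : ∀ θ ∈ Set.Ioc 0 δ, HasDerivAt r₁ (r₁' θ) θ)
    (hd₂ : ∀ θ ∈ Set.Ioc 0 δ, HasDerivAt r₂ (r₂' θ) θ)
    (hc₁ : ContinuousOn r₁' (Set.Ioc 0 δ))
    (hc₂ : ContinuousOn r₂' (Set.Ioc 0 δ))
    (hsne : ∀ θ ∈ Set.Ioc 0 δ, r₂ θ - r₁ θ ≠ 0)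
    (hCM : ∀ θ ∈ Set.Ioc 0 δ, r₁' θ = (r₂ θ - r₁ θ) * (Real.cos θ / Real.sin θ))
    (μ₀ : ℝ)
    (hμ : Tendsto (fun θ => r₂' θ / r₁' θ) (𝓝[>] (0:ℝ)) (𝓝 μ₀))
    (α : ℝ) (hα : μ₀ > α + 1) :
    Tendsto (fun θ => (r₂ θ - r₁ θ) / Real.sin θ ^ α) (𝓝[>] (0:ℝ)) (𝓝 0) := by
  obtain ⟨hδ0, hδ1⟩ := hδ
  obtain ⟨β, hαβ, hβμ⟩ := exists_between (show α < μ₀ - 1 by linarith)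
  have hev : ∀ᶠ θ in 𝓝[>] (0:ℝ), β + 1 < r₂' θ / r₁' θ :=
    hμ.eventually (lt_mem_nhds (by linarith))
  obtain ⟨ε, hε0, hε⟩ := (mem_nhdsGT_iff_exists_Ioc_subset).1 hev
  have hε0 : (0:ℝ) < ε := hε0
  set b := min ε δ with hb
  have hb0 : 0 < b := lt_min hε0 hδ0
  have hbδ : b ≤ δ := min_le_right _ _
  have hbε : b ≤ ε := min_le_left _ _
  have hsin : ∀ θ ∈ Set.Ioc 0 b, 0 < Real.sin θ := fun θ h =>
    Real.sin_pos_of_pos_of_lt_pi h.1 (by linarith [h.2, Real.pi_pos])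
  have hcos : ∀ θ ∈ Set.Ioc 0 b, 0 < Real.cos θ := fun θ h =>
    Real.cos_pos_of_mem_Ioo ⟨by linarith [h.1, Real.pi_pos], by linarith [h.2]⟩
  set g : ℝ → ℝ := fun θ => (r₂ θ - r₁ θ) ^ 2 * Real.sin θ ^ (-2 * β) with hg
  have hgd : ∀ θ ∈ Set.Ioc 0 b, HasDerivAt g
      (2 * (r₂ θ - r₁ θ) * (r₂' θ - r₁' θ) * Real.sin θ ^ (-2 * β)
        + (r₂ θ - r₁ θ) ^ 2 * (Real.cos θ * (-2 * β) * Real.sin θ ^ (-2 * β - 1))) θ := by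
    intro θ h
    have hm : θ ∈ Set.Ioc 0 δ := ⟨h.1, h.2.trans hbδ⟩
    have h1 := ((hd₂ θ hm).sub (hd₁ θ hm)).pow 2
    have h2 := (Real.hasDerivAt_sin θ).rpow_const (p := -2 * β) (Or.inl (hsin θ h).ne')
    have h3 := h1.mul h2
    refine h3.congr_deriv ?_
    simp
  have hmono : MonotoneOn g (Set.Ioc 0 b) := by
    refine monotoneOn_of_deriv_nonneg (convex_Ioc 0 b)
      (fun θ h => (hgd θ h).continuousAt.continuousWithinAt)
      (fun θ h => (hgd θ (interior_subset h)).differentiableAt.differentiableWithinAt) ?_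
    intro θ h
    have h := interior_subset h
    rw [(hgd θ h).deriv]
    have hm : θ ∈ Set.Ioc 0 δ := ⟨h.1, h.2.trans hbδ⟩
    have hs := hsin θ h
    have hc := hcos θ h
    have hne := hsne θ hm
    have hq : β + 1 < r₂' θ / r₁' θ := hε ⟨h.1, h.2.trans hbε⟩
    have hr1 : r₁' θ ≠ 0 := by
      rw [hCM θ hm]; exact mul_ne_zero hne (div_pos hc hs).ne'
    have e2 : r₂' θ = r₂' θ / r₁' θ * r₁' θ := by field_simp
    rw [Real.rpow_sub_one hs.ne']
    set q := r₂' θ / r₁' θ with hqd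
    rw [e2, hCM θ hm]
    set s := r₂ θ - r₁ θ
    have hp : 0 < Real.sin θ ^ (-2 * β) := Real.rpow_pos_of_pos hs _
    set P := Real.sin θ ^ (-2 * β)
    have : 2 * s * (q * (s * (Real.cos θ / Real.sin θ)) - s * (Real.cos θ / Real.sin θ)) * P
        + s ^ 2 * (Real.cos θ * (-2 * β) * (P / Real.sin θ))
        = 2 * s ^ 2 * (q - 1 - β) * (Real.cos θ / Real.sin θ) * P := by
      field_simp; ring
    rw [this]
    have : 0 ≤ q - 1 - β := by linarith
    positivity
  have hlim : Tendsto (fun θ => g b * Real.sin θ ^ (2 * (β - α))) (𝓝[>] (0:ℝ)) (𝓝 0) := by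
    have h1 : Tendsto (fun θ => g b * Real.sin θ ^ (2 * (β - α))) (𝓝 (0:ℝ))
        (𝓝 (g b * Real.sin 0 ^ (2 * (β - α)))) := by
      refine Tendsto.const_mul _ ?_
      exact (Real.continuous_sin.tendsto 0).rpow_const (Or.inr (by linarith))
    rw [Real.sin_zero, Real.zero_rpow (by linarith), mul_zero] at h1
    exact h1.mono_left nhdsWithin_le_nhds
  have hsq : Tendsto (fun θ => ((r₂ θ - r₁ θ) / Real.sin θ ^ α) ^ 2) (𝓝[>] (0:ℝ)) (𝓝 0) := by
    refine squeeze_zero' (Eventually.of_forall fun θ => sq_nonneg _) ?_ hlim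
    filter_upwards [Ioc_mem_nhdsGT hb0] with θ h
    have hs := hsin θ h
    have hle := hmono h ⟨hb0, le_rfl⟩ h.2
    have : ((r₂ θ - r₁ θ) / Real.sin θ ^ α) ^ 2 = g θ * Real.sin θ ^ (2 * (β - α)) := by
      simp only [hg]
      rw [mul_assoc, ← Real.rpow_add hs, div_pow, div_eq_mul_inv, ← Real.rpow_mul_natCast hs.le,
        ← Real.rpow_neg hs.le]
      congr 2
      push_cast; ring
    rw [this]
    exact mul_le_mul_of_nonneg_right hle (Real.rpow_pos_of_pos hs _).le
  have h := hsq.sqrt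
  simp only [Real.sqrt_sq_eq_abs, Real.sqrt_zero] at h
  exact (tendsto_zero_iff_abs_tendsto_zero _).2 h
end

section
/- Let δ ∈ (0,π/2), let r₁, r₂ : (0,δ] → ℝ be continuously differentiable with s := r₂ − r₁ nowhere zero on (0,δ], suppose the derived Codazzi–Mainardi equation r₁'(θ) = s(θ)·cot θ holds on (0,δ], and suppose the umbilic slope μ₀ = lim_{θ→0} r₂'(θ)/r₁'(θ) exists. If μ₀ < α + 1 for some α ∈ ℝ, then |s(θ)|/sin^α θ → +∞ as θ → 0. -/
open Real Set Filter Topology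

/-- If the umbilic slope `μ₀ = lim_{θ→0} r₂'/r₁'` exists and `μ₀ < α + 1`,
then `|s|/sin^α θ → +∞` as `θ → 0`. -/
theorem slope_lt_implies_divergence
    (δ : ℝ) (hδ : δ ∈ Set.Ioo 0 (π/2))
    (r₁ r₂ r₁' r₂' : ℝ → ℝ)
    (hd₁ : ∀ θ ∈ Set.Ioc 0 δ, HasDerivAt r₁ (r₁' θ) θ)
    (hd₂ : ∀ θ ∈ Set.Ioc 0 δ, HasDerivAt r₂ (r₂' θ) θ)
    (hc₁ : ContinuousOn r₁' (Set.Ioc 0 δ))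
    (hc₂ : ContinuousOn r₂' (Set.Ioc 0 δ))
    (hsne : ∀ θ ∈ Set.Ioc 0 δ, r₂ θ - r₁ θ ≠ 0)
    (hCM : ∀ θ ∈ Set.Ioc 0 δ, r₁' θ = (r₂ θ - r₁ θ) * (Real.cos θ / Real.sin θ))
    (μ₀ : ℝ)
    (hμ : Tendsto (fun θ => r₂' θ / r₁' θ) (𝓝[>] (0:ℝ)) (𝓝 μ₀))
    (α : ℝ) (hα : μ₀ < α + 1) :
    Tendsto (fun θ => |r₂ θ - r₁ θ| / Real.sin θ ^ α) (𝓝[>] (0:ℝ)) atTop := by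
  obtain ⟨β, hβ1, hβ2⟩ := exists_between (show μ₀ - 1 < α by linarith)
  have hev : ∀ᶠ θ in 𝓝[>] (0:ℝ), r₂' θ / r₁' θ < β + 1 :=
    hμ.eventually (gt_mem_nhds (by linarith))
  obtain ⟨u, hu0, hu⟩ := (mem_nhdsGT_iff_exists_Ioc_subset).1 hev
  have hu0' : (0:ℝ) < u := hu0
  obtain ⟨hδ0, hδ1⟩ := hδ
  set ε := min u δ with hε
  have hε0 : 0 < ε := lt_min hu0' hδ0
  have hsub : ∀ θ ∈ Set.Ioc 0 ε, θ ∈ Set.Ioc 0 δ :=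
    fun θ h => ⟨h.1, h.2.trans (min_le_right _ _)⟩
  have hsin : ∀ θ ∈ Set.Ioc 0 ε, 0 < Real.sin θ := fun θ h =>
    Real.sin_pos_of_pos_of_lt_pi h.1 (by have := (hsub θ h).2; linarith [Real.pi_pos])
  have hcos : ∀ θ ∈ Set.Ioc 0 ε, 0 < Real.cos θ := fun θ h =>
    Real.cos_pos_of_mem_Ioo ⟨by linarith [h.1, Real.pi_pos], by linarith [(hsub θ h).2]⟩
  let F : ℝ → ℝ := fun θ => Real.log (r₂ θ - r₁ θ) - β * Real.log (Real.sin θ)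
  have hF : ∀ θ ∈ Set.Ioc 0 ε, HasDerivAt F
      ((r₂' θ - r₁' θ) / (r₂ θ - r₁ θ) - β * (Real.cos θ / Real.sin θ)) θ := fun θ h =>
    (((hd₂ θ (hsub θ h)).sub (hd₁ θ (hsub θ h))).log (hsne θ (hsub θ h))).sub
      (((Real.hasDerivAt_sin θ).log (hsin θ h).ne').const_mul β)
  have hanti : AntitoneOn F (Set.Ioc 0 ε) := by
    apply antitoneOn_of_deriv_nonpos (convex_Ioc 0 ε)
    · exact fun θ h => (hF θ h).continuousAt.continuousWithinAt
    · exact fun θ h => (hF θ (interior_subset h)).differentiableAt.differentiableWithinAt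
    · intro θ h
      have h := interior_subset h
      rw [(hF θ h).deriv]
      have hq : r₂' θ / r₁' θ < β + 1 := hu ⟨h.1, h.2.trans (min_le_left _ _)⟩
      have hs := hsne θ (hsub θ h)
      have hcot : 0 < Real.cos θ / Real.sin θ := div_pos (hcos θ h) (hsin θ h)
      have h1 : r₁' θ ≠ 0 := by
        rw [hCM θ (hsub θ h)]; exact mul_ne_zero hs hcot.ne'
      have h2 : (r₂' θ - r₁' θ) / (r₂ θ - r₁ θ)
          = (r₂' θ / r₁' θ - 1) * (Real.cos θ / Real.sin θ) := by
        have h3 : r₂' θ - r₁' θ = (r₂' θ / r₁' θ - 1) * r₁' θ := by field_simp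
        rw [h3, div_eq_iff hs, mul_assoc]
        congr 1
        rw [hCM θ (hsub θ h)]; ring
      rw [h2, ← sub_mul]
      exact mul_nonpos_of_nonpos_of_nonneg (by linarith) hcot.le
  have hmem : Set.Ioc 0 ε ∈ 𝓝[>] (0:ℝ) := Ioc_mem_nhdsGT hε0
  have hsin0 : Tendsto Real.sin (𝓝[>] (0:ℝ)) (𝓝[>] (0:ℝ)) := by
    apply tendsto_nhdsWithin_of_tendsto_nhds_of_eventually_within
    · have := Real.continuous_sin.tendsto 0
      rw [Real.sin_zero] at this
      exact this.mono_left nhdsWithin_le_nhds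
    · filter_upwards [hmem] with θ h using hsin θ h
  have hlog : Tendsto (fun θ => Real.log (Real.sin θ)) (𝓝[>] (0:ℝ)) atBot :=
    Real.tendsto_log_nhdsGT_zero.comp hsin0
  have hlim : Tendsto (fun θ => Real.exp (F ε + (β - α) * Real.log (Real.sin θ)))
      (𝓝[>] (0:ℝ)) atTop :=
    Real.tendsto_exp_atTop.comp (tendsto_atTop_add_const_left _ _
      (hlog.const_mul_atBot_of_neg (by linarith)))
  refine tendsto_atTop_mono' _ ?_ hlim
  filter_upwards [hmem] with θ h
  have hle : F ε ≤ F θ := hanti h ⟨hε0, le_rfl⟩ h.2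
  have hs := abs_pos.2 (hsne θ (hsub θ h))
  rw [Real.rpow_def_of_pos (hsin θ h), ← Real.exp_log hs, ← Real.exp_sub, Real.log_abs]
  apply Real.exp_le_exp.2
  simp only [F] at hle ⊢
  linarith
end

section
/- Let δ ∈ (0,π/2), let r₁, r₂ : [0,δ] → ℝ be infinitely differentiable with s := r₂ − r₁ satisfying s(0) = 0 and s^{(2m+1)}(0) = 0 for every m ∈ ℕ (as holds for a smooth strictly convex rotationally symmetric sphere), with s nowhere zero on (0,δ], and suppose the derived Codazzi–Mainardi equation r₁'(θ) = s(θ)·cot θ holds on (0,δ]. If the umbilic slope μ = lim_{θ→0} r₂'(θ)/r₁'(θ) exists and is finite, then μ is an odd integer ≥ 3; moreover, writing μ = 2k+1 with k ≥ 1, the limit lim_{θ→0} s(θ)/sin^{2k} θ = s^{(2k)}(0)/(2k)! exists and is finite and nonzero. -/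
open Real Set Filter Topology

theorem taylor_aux (n : ℕ) : ∀ f : ℝ → ℝ, ContDiff ℝ (⊤ : ℕ∞) f →
    (∀ i < n, iteratedDeriv i f 0 = 0) →
    Tendsto (fun x => f x / x ^ n) (𝓝[>] (0:ℝ)) (𝓝 (iteratedDeriv n f 0 / n.factorial)) := by
  induction n with
  | zero =>
    intro f hf _
    simpa using (hf.continuous.tendsto 0).mono_left nhdsWithin_le_nhds
  | succ n ih =>
    intro f hf h0
    have hf' : ContDiff ℝ (⊤ : ℕ∞) (deriv f) := (contDiff_infty_iff_deriv.1 hf).2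
    have hI := ih (deriv f) hf' (fun i hi => by
      rw [← iteratedDeriv_succ']; exact h0 (i+1) (by omega))
    rw [← iteratedDeriv_succ'] at hI
    have hd : Differentiable ℝ f := (contDiff_infty_iff_deriv.1 hf).1
    have hf0 : f 0 = 0 := by simpa using h0 0 (by omega)
    apply deriv.lhopital_zero_nhdsGT
    · exact Eventually.of_forall fun x => hd x
    · filter_upwards [self_mem_nhdsWithin] with x hx
      have hx : 0 < x := hx
      simp only [deriv_pow_field]
      positivity
    · simpa [hf0] using (hf.continuous.tendsto 0).mono_left nhdsWithin_le_nhds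
    · have : Tendsto (fun x : ℝ => x ^ (n+1)) (𝓝 0) (𝓝 (0 ^ (n+1))) :=
        (continuous_pow (n+1)).tendsto 0
      simpa using this.mono_left nhdsWithin_le_nhds
    · have h2 := hI.div_const ((n:ℝ)+1)
      convert h2 using 1
      · funext x
        simp only [deriv_pow_field]
        push_cast
        rw [div_div, mul_comm]
      · congr 1
        rw [Nat.factorial_succ, div_div]
        push_cast
        rw [mul_comm]

theorem flat_aux (δ a : ℝ) (hδ : 0 < δ) (s : ℝ → ℝ) (hs : ContDiff ℝ (⊤ : ℕ∞) s)
    (hsne : ∀ θ ∈ Set.Ioc 0 δ, s θ ≠ 0)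
    (ha : Tendsto (fun x => x * deriv s x / s x) (𝓝[>] (0:ℝ)) (𝓝 a))
    (h0 : ∀ i, iteratedDeriv i s 0 = 0) : False := by
  obtain ⟨M, hM⟩ := exists_nat_gt a
  have hd : Differentiable ℝ s := (contDiff_infty_iff_deriv.1 hs).1
  have hT := taylor_aux M s hs (fun i _ => h0 i)
  rw [h0, zero_div] at hT
  have hT2 : Tendsto (fun x => (s x / x ^ M) ^ 2) (𝓝[>] (0:ℝ)) (𝓝 0) := by
    simpa using hT.pow 2
  obtain ⟨e, he, hev⟩ := mem_nhdsGT_iff_exists_Ioo_subset.1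
    (inter_mem (ha.eventually (gt_mem_nhds hM)) (Ioo_mem_nhdsGT hδ))
  have he : 0 < e := he
  have hder : ∀ x ∈ Ioo 0 e, HasDerivAt (fun x => (s x / x ^ M) ^ 2)
      (2 * (s x / x ^ M) ^ 2 / x * (x * deriv s x / s x - M)) x := by
    intro x hx
    have hx0 : 0 < x := hx.1
    have hsx : s x ≠ 0 := hsne x ⟨hx0, (hev hx).2.2.le⟩
    have h1 := (((hd x).hasDerivAt.div (hasDerivAt_pow M x) (by positivity)).pow 2)
    refine h1.congr_deriv ?_
    rcases M with _ | m
    · simp; field_simp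
    · simp [pow_succ]; field_simp
  have hanti : AntitoneOn (fun x => (s x / x ^ M) ^ 2) (Ioo 0 e) := by
    apply antitoneOn_of_deriv_nonpos (convex_Ioo 0 e)
    · exact fun x hx => (hder x hx).continuousAt.continuousWithinAt
    · rw [interior_Ioo]
      exact fun x hx => (hder x hx).differentiableAt.differentiableWithinAt
    · rw [interior_Ioo]
      intro x hx
      rw [(hder x hx).deriv]
      have hx0 : 0 < x := hx.1
      have : x * deriv s x / s x < M := (hev hx).1
      exact mul_nonpos_of_nonneg_of_nonpos (by positivity) (by linarith)
  have hx : e / 2 ∈ Ioo 0 e := ⟨by linarith, by linarith⟩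
  have hle : (s (e/2) / (e/2) ^ M) ^ 2 ≤ 0 := by
    apply ge_of_tendsto hT2
    filter_upwards [Ioo_mem_nhdsGT hx.1] with y hy
    exact hanti ⟨hy.1, hy.2.trans hx.2⟩ hx hy.2.le
  have hsx : s (e/2) ≠ 0 := hsne _ ⟨hx.1, (hev hx).2.2.le⟩
  have hx0 : 0 < e / 2 := hx.1
  have : 0 < (s (e/2) / (e/2) ^ M) ^ 2 := by positivity
  linarith

/-- Quantisation of the umbilic slope for smooth surfaces: if the umbilic slope
`μ = lim_{θ→0} r₂'/r₁'` exists and is finite, then `μ = 2k+1` for an integer `k ≥ 1`,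
and `s/sin^{2k} θ → s^{(2k)}(0)/(2k)! ≠ 0` as `θ → 0`. -/
theorem smooth_slope_quantisation
    (δ : ℝ) (hδ : δ ∈ Set.Ioo 0 (π/2))
    (r₁ r₂ : ℝ → ℝ) (h₁ : ContDiff ℝ (⊤ : ℕ∞) r₁) (h₂ : ContDiff ℝ (⊤ : ℕ∞) r₂)
    (s : ℝ → ℝ) (hsdef : s = fun θ => r₂ θ - r₁ θ)
    (hs0 : s 0 = 0)
    (hodd : ∀ m : ℕ, iteratedDeriv (2*m+1) s 0 = 0)
    (hsne : ∀ θ ∈ Set.Ioc 0 δ, s θ ≠ 0)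
    (hCM : ∀ θ ∈ Set.Ioc 0 δ, deriv r₁ θ = s θ * (Real.cos θ / Real.sin θ))
    (μ : ℝ)
    (hμ : Tendsto (fun θ => deriv r₂ θ / deriv r₁ θ) (𝓝[>] (0:ℝ)) (𝓝 μ)) :
    ∃ k : ℕ, 1 ≤ k ∧ μ = 2*(k:ℝ)+1 ∧
      iteratedDeriv (2*k) s 0 ≠ 0 ∧
      Tendsto (fun θ => s θ / Real.sin θ ^ (2*k)) (𝓝[>] (0:ℝ))
        (𝓝 (iteratedDeriv (2*k) s 0 / (Nat.factorial (2*k)))) := by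
  obtain ⟨hδ0, hδ1⟩ := hδ
  have hs : ContDiff ℝ (⊤ : ℕ∞) s := by rw [hsdef]; exact h₂.sub h₁
  have hd1 : Differentiable ℝ r₁ := (contDiff_infty_iff_deriv.1 h₁).1
  have hd2 : Differentiable ℝ r₂ := (contDiff_infty_iff_deriv.1 h₂).1
  have hds : ∀ x, deriv s x = deriv r₂ x - deriv r₁ x := by
    intro x; rw [hsdef]; exact deriv_fun_sub (hd2 x) (hd1 x)
  have hsin : Tendsto (fun x => Real.sin x / x) (𝓝[>] (0:ℝ)) (𝓝 1) := by
    have := taylor_aux 1 Real.sin Real.contDiff_sin (by intro i hi; interval_cases i; simp)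
    simpa [iteratedDeriv_one] using this
  have hcos : Tendsto Real.cos (𝓝[>] (0:ℝ)) (𝓝 1) := by
    simpa using (Real.continuous_cos.tendsto 0).mono_left nhdsWithin_le_nhds
  have ha : Tendsto (fun x => x * deriv s x / s x) (𝓝[>] (0:ℝ)) (𝓝 (μ - 1)) := by
    have h := ((hμ.sub_const 1).mul hcos).div hsin one_ne_zero
    rw [mul_one, div_one] at h
    refine h.congr' ?_
    filter_upwards [Ioo_mem_nhdsGT hδ0] with x hx
    have hx0 : 0 < x := hx.1
    have hsx : s x ≠ 0 := hsne x ⟨hx.1, hx.2.le⟩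
    have hsn : Real.sin x ≠ 0 := (Real.sin_pos_of_pos_of_lt_pi hx0 (by linarith [hx.2, Real.pi_pos])).ne'
    have hcs : Real.cos x ≠ 0 := (Real.cos_pos_of_mem_Ioo ⟨by linarith [Real.pi_pos], by linarith [hx.2]⟩).ne'
    have h2 : deriv r₂ x = deriv s x + deriv r₁ x := by rw [hds]; ring
    simp only [Pi.div_apply, h2, hCM x ⟨hx.1, hx.2.le⟩]
    field_simp
    ring
  classical
  have hex : ∃ n, iteratedDeriv n s 0 ≠ 0 := by
    by_contra! hcon
    exact flat_aux δ _ hδ0 s hs hsne ha hcon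
  obtain ⟨n, hn, hmin⟩ : ∃ n, iteratedDeriv n s 0 ≠ 0 ∧ ∀ i < n, iteratedDeriv i s 0 = 0 :=
    ⟨Nat.find hex, Nat.find_spec hex, fun i hi => by simpa using Nat.find_min hex hi⟩
  rcases Nat.even_or_odd' n with ⟨k, rfl | rfl⟩
  swap
  · exact absurd (hodd k) hn
  have hk : 1 ≤ k := by
    by_contra hk
    have : k = 0 := by omega
    subst this
    exact hn (by simpa using hs0)
  have hT := taylor_aux (2*k) s hs hmin
  have hTd := taylor_aux (2*k-1) (deriv s) (contDiff_infty_iff_deriv.1 hs).2 (fun i hi => by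
      rw [← iteratedDeriv_succ']; exact hmin (i+1) (by omega))
  rw [← iteratedDeriv_succ', Nat.sub_add_cancel (by omega)] at hTd
  have hfac : ((2*k).factorial : ℝ) = 2 * k * (2*k-1).factorial := by
    rw [← Nat.mul_factorial_pred (by omega : 2*k ≠ 0)]; push_cast; ring
  have hf0 : ((2*k-1).factorial : ℝ) ≠ 0 := by positivity
  refine ⟨k, hk, ?_, hn, ?_⟩
  · have h := hTd.div hT (by positivity)
    have h' := tendsto_nhds_unique ha (h.congr' (by
      filter_upwards [self_mem_nhdsWithin] with x hx
      have hx0 : 0 < x := hx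
      obtain ⟨m, rfl⟩ : ∃ m, k = m + 1 := ⟨k-1, by omega⟩
      have e : 2 * (m+1) = (2*(m+1) - 1) + 1 := by omega
      have e2 : x ^ (2*(m+1)) = x ^ (2*(m+1) - 1) * x := by rw [← pow_succ, ← e]
      simp only [Pi.div_apply, e2]
      field_simp))
    have hk0 : (k:ℝ) ≠ 0 := by positivity
    rw [hfac] at h'
    field_simp at h'
    linarith
  · have h := hT.div (hsin.pow (2*k)) (by simp)
    rw [one_pow, div_one] at h
    refine h.congr' ?_
    filter_upwards [self_mem_nhdsWithin] with x hx
    have hx0 : 0 < x := hx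
    simp only [Pi.div_apply, Pi.pow_apply, div_pow]
    field_simp
end

section
/- Let δ ∈ (0,π/2), let r₁, r₂ : [0,δ] → ℝ be continuously differentiable with s := r₂ − r₁ twice continuously differentiable on [0,δ], s(0) = 0, s'(0) = 0, s nowhere zero on (0,δ], and suppose the derived Codazzi–Mainardi equation r₁'(θ) = s(θ)·cot θ holds on (0,δ]. If the umbilic slope μ₀ = lim_{θ→0} r₂'(θ)/r₁'(θ) exists in ℝ, then μ₀ ≥ 3. -/
open Real Set Filter Topology

/-- For a C⁴-smooth strictly convex rotationally symmetric sphere (so that the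
astigmatism `s = r₂ − r₁` is C² with `s(0) = s'(0) = 0`), if the umbilic slope
`μ₀ = lim_{θ→0} r₂'/r₁'` exists in `ℝ` then `μ₀ ≥ 3`. -/
theorem c4_umbilic_slope_ge_three
    (δ : ℝ) (hδ : δ ∈ Set.Ioo 0 (π/2))
    (r₁ r₂ : ℝ → ℝ) (h₁ : ContDiff ℝ 1 r₁) (h₂ : ContDiff ℝ 1 r₂)
    (hs2 : ContDiff ℝ 2 (fun θ => r₂ θ - r₁ θ))
    (hs0 : r₂ 0 - r₁ 0 = 0)
    (hs1 : deriv (fun θ => r₂ θ - r₁ θ) 0 = 0)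
    (hsne : ∀ θ ∈ Set.Ioc 0 δ, r₂ θ - r₁ θ ≠ 0)
    (hCM : ∀ θ ∈ Set.Ioc 0 δ, deriv r₁ θ = (r₂ θ - r₁ θ) * (Real.cos θ / Real.sin θ))
    (μ₀ : ℝ)
    (hμ : Tendsto (fun θ => deriv r₂ θ / deriv r₁ θ) (𝓝[>] (0:ℝ)) (𝓝 μ₀)) :
    3 ≤ μ₀ := by
  by_contra hlt
  push Not at hlt
  obtain ⟨hδ0, hδ2⟩ := hδ
  have hpi := Real.pi_pos
  set s : ℝ → ℝ := fun θ => r₂ θ - r₁ θ with hs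
  have hr1 : Differentiable ℝ r₁ := h₁.differentiable (by norm_num)
  have hr2 : Differentiable ℝ r₂ := h₂.differentiable (by norm_num)
  have hsd : Differentiable ℝ s := hs2.differentiable (by norm_num)
  have hds : ∀ x, deriv s x = deriv r₂ x - deriv r₁ x := fun x =>
    deriv_fun_sub (hr2 x) (hr1 x)
  have hsdd : Differentiable ℝ (deriv s) := by
    have h : ContDiff ℝ 1 (deriv s) := by
      have h2 : ContDiff ℝ (1 + 1) s := by
        have e : (1 + 1 : WithTop ℕ∞) = 2 := by norm_num
        rw [e]; exact hs2
      exact (contDiff_succ_iff_deriv.1 h2).2.2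
    exact h.differentiable (by norm_num)
  -- quadratic bound near the pole
  have hO : (fun x => deriv s x - deriv s 0) =O[𝓝 0] (fun x => x - 0) :=
    (hsdd 0).isBigO_sub
  obtain ⟨C, hCpos, hC⟩ := hO.exists_pos
  have hC := hC.bound
  obtain ⟨ρ, hρ, hCρ⟩ := Metric.eventually_nhds_iff.1 hC
  have hquad : ∀ x, 0 < x → x < ρ → |s x| ≤ C * x ^ 2 := by
    intro x hx hxρ
    obtain ⟨y, hy, hyeq⟩ := exists_deriv_eq_slope s hx hsd.continuous.continuousOn
      hsd.differentiableOn
    have hs00 : s 0 = 0 := hs0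
    rw [hs00, sub_zero, sub_zero, eq_div_iff hx.ne'] at hyeq
    have hb := hCρ (y := y) (by
      rw [Real.dist_eq, sub_zero, abs_of_pos hy.1]; exact hy.2.trans hxρ)
    rw [hs1, sub_zero, sub_zero, Real.norm_eq_abs, Real.norm_eq_abs, abs_of_pos hy.1] at hb
    rw [← hyeq, abs_mul, abs_of_pos hx]
    have := hy.2
    calc |deriv s y| * x ≤ (C * y) * x := by gcongr
      _ ≤ (C * x) * x := by gcongr
      _ = C * x ^ 2 := by ring
  -- the exponent
  obtain ⟨cc, hclow, hchigh⟩ := exists_between hlt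
  have hev := hμ.eventually (gt_mem_nhds hclow)
  obtain ⟨η, hη, hηs⟩ := mem_nhdsGT_iff_exists_Ioo_subset.1 hev
  have hη0 : 0 < η := hη
  set c := cc - 1 with hc
  obtain ⟨ε, hε0, hεm⟩ := exists_between (lt_min hδ0 (lt_min hη0 hρ))
  have hεδ : ε < δ := hεm.trans_le (min_le_left _ _)
  have hεη : ε < η := hεm.trans_le ((min_le_right _ _).trans (min_le_left _ _))
  have hερ : ε < ρ := hεm.trans_le ((min_le_right _ _).trans (min_le_right _ _))
  have hsin : ∀ x, 0 < x → x ≤ ε → 0 < Real.sin x := fun x h0 h1 =>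
    Real.sin_pos_of_pos_of_lt_pi h0 (by linarith)
  have hcos : ∀ x, 0 < x → x ≤ ε → 0 < Real.cos x := fun x h0 h1 =>
    Real.cos_pos_of_mem_Ioo ⟨by linarith, by linarith⟩
  have hsnz : ∀ x, 0 < x → x ≤ ε → s x ≠ 0 := fun x h0 h1 => hsne x ⟨h0, by linarith⟩
  set f : ℝ → ℝ := fun x => Real.log (s x) - c * Real.log (Real.sin x) with hf
  have hfd : ∀ x, 0 < x → x ≤ ε →
      HasDerivAt f (deriv s x / s x - c * (Real.cos x / Real.sin x)) x := by
    intro x h0 h1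
    exact ((hsd x).hasDerivAt.log (hsnz x h0 h1)).sub
      (((Real.hasDerivAt_sin x).log (hsin x h0 h1).ne').const_mul c)
  have hneg : ∀ x, 0 < x → x ≤ ε →
      deriv s x / s x - c * (Real.cos x / Real.sin x) ≤ 0 := by
    intro x h0 h1
    have hq : deriv r₂ x / deriv r₁ x < cc := hηs ⟨h0, by linarith⟩
    have hcm : deriv r₁ x = s x * (Real.cos x / Real.sin x) := hCM x ⟨h0, by linarith⟩
    have hk : 0 < Real.cos x / Real.sin x := div_pos (hcos x h0 h1) (hsin x h0 h1)
    have hsx := hsnz x h0 h1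
    have e : deriv r₂ x = deriv s x + deriv r₁ x := by rw [hds]; ring
    rw [e, hcm] at hq
    set k := Real.cos x / Real.sin x
    have e2 : (deriv s x + s x * k) / (s x * k) = deriv s x / s x / k + 1 := by
      have := hk.ne'
      field_simp
    rw [e2] at hq
    have hq2 : deriv s x / s x / k < c := by rw [hc]; linarith
    rw [div_lt_iff₀ hk] at hq2
    linarith
  have hanti : AntitoneOn f (Set.Ioc 0 ε) := by
    apply antitoneOn_of_deriv_nonpos (convex_Ioc 0 ε)
    · intro x hx
      exact (hfd x hx.1 hx.2).continuousAt.continuousWithinAt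
    · intro x hx
      rw [interior_Ioc] at hx
      exact (hfd x hx.1 hx.2.le).differentiableAt.differentiableWithinAt
    · intro x hx
      rw [interior_Ioc] at hx
      rw [(hfd x hx.1 hx.2.le).deriv]
      exact hneg x hx.1 hx.2.le
  -- upper bound
  have hub : ∀ x, 0 < x → x ≤ ε →
      f ε ≤ Real.log (C * (π / 2) ^ 2) + (2 - c) * Real.log (Real.sin x) := by
    intro x h0 h1
    have ha := hanti ⟨h0, h1⟩ ⟨hε0, le_refl ε⟩ h1
    have hsx := hsin x h0 h1
    have hj : x ≤ π / 2 * Real.sin x := by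
      have := Real.mul_le_sin h0.le (by linarith : x ≤ π / 2)
      calc x = π / 2 * (2 / π * x) := by field_simp
        _ ≤ _ := by gcongr
    have hb : |s x| ≤ C * (π / 2) ^ 2 * Real.sin x ^ 2 := by
      refine (hquad x h0 (by linarith)).trans ?_
      calc C * x ^ 2 ≤ C * (π / 2 * Real.sin x) ^ 2 := by gcongr
        _ = _ := by ring
    have hl := Real.log_le_log (abs_pos.2 (hsnz x h0 h1)) hb
    rw [Real.log_abs, Real.log_mul (by positivity) (by positivity), Real.log_pow] at hl
    push_cast at hl
    have : f x = Real.log (s x) - c * Real.log (Real.sin x) := rfl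
    linarith
  have hts : Tendsto Real.sin (𝓝[>] (0:ℝ)) (𝓝[>] 0) := by
    apply tendsto_nhdsWithin_of_tendsto_nhds_of_eventually_within
    · have := Real.continuous_sin.tendsto 0
      rw [Real.sin_zero] at this
      exact this.mono_left nhdsWithin_le_nhds
    · filter_upwards [Ioc_mem_nhdsGT hε0] with x hx
      exact hsin x hx.1 hx.2
  have htl := Real.tendsto_log_nhdsGT_zero.comp hts
  have hev2 := htl.eventually
    (eventually_lt_atBot ((f ε - Real.log (C * (π / 2) ^ 2)) / (2 - c)))
  obtain ⟨x, hx, hxm⟩ := (hev2.and (Ioc_mem_nhdsGT hε0)).exists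
  have h2c : 0 < 2 - c := by rw [hc]; linarith
  simp only [Function.comp] at hx
  rw [lt_div_iff₀ h2c] at hx
  have := hub x hxm.1 hxm.2
  linarith
end

section
/- Let a, b, c ∈ ℝ with b ≠ 0, and let r₁, r₂ : (0,π) → ℝ be continuously differentiable functions satisfying the derived Codazzi–Mainardi equation r₁'(θ) = (r₂(θ) − r₁(θ))·cot θ and the linear curvature relationship a·r₁(θ) + b·r₂(θ) + c = 0 on (0,π). Then there exists a constant C₀ ∈ ℝ such that r₂(θ) − r₁(θ) = C₀·(sin θ)^{2n+2} for all θ ∈ (0,π), where n is determined by −a/b = 2n + 3 (so that 2n + 2 = −(a+b)/b). -/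
open Real Set

/-- Linear Hopf spheres: if `r₁, r₂` satisfy the derived Codazzi–Mainardi equation and the
linear curvature relationship `a·r₁ + b·r₂ + c = 0` on `(0,π)`, then the astigmatism is
`r₂ − r₁ = C₀·sin^{2n+2} θ` where `−a/b = 2n+3`. -/
theorem linear_hopf_sphere_astigmatism
    (a b c n : ℝ) (hb : b ≠ 0) (hn : -a/b = 2*n+3)
    (r₁ r₂ : ℝ → ℝ)
    (h₁ : ContDiffOn ℝ 1 r₁ (Set.Ioo 0 π))
    (h₂ : ContDiffOn ℝ 1 r₂ (Set.Ioo 0 π))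
    (hCM : ∀ θ ∈ Set.Ioo 0 π, deriv r₁ θ = (r₂ θ - r₁ θ) * (Real.cos θ / Real.sin θ))
    (hlin : ∀ θ ∈ Set.Ioo 0 π, a * r₁ θ + b * r₂ θ + c = 0) :
    ∃ C₀ : ℝ, ∀ θ ∈ Set.Ioo 0 π, r₂ θ - r₁ θ = C₀ * Real.sin θ ^ (2*n+2) := by
  have hs : ∀ θ ∈ Set.Ioo 0 π, r₂ θ - r₁ θ = (2*n+2) * r₁ θ - c / b := by
    intro θ hθ
    have h := hlin θ hθ
    have ha : a = -(2*n+3) * b := by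
      field_simp at hn
      linarith
    field_simp
    rw [ha] at h
    linarith
  have hF : ∀ θ ∈ Set.Ioo 0 π, HasDerivAt
      (fun x => ((2*n+2) * r₁ x - c / b) * Real.sin x ^ (-(2*n+2))) 0 θ := by
    intro θ hθ
    have hsin : 0 < Real.sin θ := Real.sin_pos_of_mem_Ioo hθ
    have hd : DifferentiableAt ℝ r₁ θ :=
      (h₁.differentiableOn (by norm_num)).differentiableAt (isOpen_Ioo.mem_nhds hθ)
    have h1 := hd.hasDerivAt
    rw [hCM θ hθ, hs θ hθ] at h1
    have h2 := (Real.hasDerivAt_sin θ).rpow_const (p := -(2*n+2)) (Or.inl hsin.ne')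
    have h3 := ((h1.const_mul (2*n+2)).sub_const (c / b)).mul h2
    refine h3.congr_deriv ?_
    rw [Real.rpow_sub_one hsin.ne']
    field_simp
    ring
  have hconst : ∀ x ∈ Set.Ioo 0 π, ∀ y ∈ Set.Ioo 0 π,
      ((2*n+2) * r₁ x - c / b) * Real.sin x ^ (-(2*n+2))
        = ((2*n+2) * r₁ y - c / b) * Real.sin y ^ (-(2*n+2)) := by
    intro x hx y hy
    exact isOpen_Ioo.is_const_of_deriv_eq_zero isPreconnected_Ioo
      (fun z hz => (hF z hz).differentiableAt.differentiableWithinAt)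
      (fun z hz => (hF z hz).deriv) hx hy
  have hp : π / 2 ∈ Set.Ioo 0 π := ⟨by positivity, by linarith [Real.pi_pos]⟩
  refine ⟨((2*n+2) * r₁ (π/2) - c / b) * Real.sin (π/2) ^ (-(2*n+2)), fun θ hθ => ?_⟩
  have hsin : 0 < Real.sin θ := Real.sin_pos_of_mem_Ioo hθ
  rw [← hconst θ hθ _ hp, hs θ hθ, mul_assoc, ← Real.rpow_add hsin]
  simp
end

section
/- Let r : [0,π] → ℝ be twice continuously differentiable with r'(0) = r'(π) = 0, and suppose θ ↦ (r''(θ) − r'(θ)·cot θ)/sin θ is integrable on (0,π). Then ∫₀^π (r''(θ) − r'(θ)·cot θ)/sin θ dθ = −(r''(0) + r''(π)). Equivalently, writing s = r₂ − r₁ for the astigmatism and f₀ = r(0) − r₁(0), f_π = −r(π) + r₁(π) for the x³-coordinates of the focal points at the poles (where r₁(0) = r(0) + r''(0) and r₁(π) = r(π) + r''(π) are the limiting values of r₁ = r'·cot θ + r), one has ∫₀^π s(θ)/sin θ dθ = f₀ − f_π. -/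
open Real Set MeasureTheory

/-- The quotient of two functions vanishing at `a` tends to the quotient of derivatives. -/
lemma tendsto_div_of_hasDerivAt {f g : ℝ → ℝ} {a f' g' : ℝ} (hf : HasDerivAt f f' a)
    (hg : HasDerivAt g g' a) (hfa : f a = 0) (hga : g a = 0) (hg' : g' ≠ 0) :
    Filter.Tendsto (fun x => f x / g x) (nhdsWithin a {a}ᶜ) (nhds (f' / g')) := by
  have h := (hasDerivAt_iff_tendsto_slope.1 hf).div (hasDerivAt_iff_tendsto_slope.1 hg) hg'
  refine h.congr' ?_
  filter_upwards [self_mem_nhdsWithin] with x hx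
  have hx' : x - a ≠ 0 := sub_ne_zero.2 hx
  simp only [Pi.div_apply, slope_def_field, hfa, hga, sub_zero]
  rw [div_div_div_cancel_right₀ hx']

/-- For a support function `r` that is C² with `r'(0) = r'(π) = 0`, if the astigmatism
`s = r'' − r'·cot θ` satisfies `s/sin θ` integrable on `(0,π)`, then
`∫₀^π s/sin θ dθ = −(r''(0) + r''(π)) = f₀ − f_π`, the signed distance between the focal
points at the poles. -/
theorem astigmatism_integral_eq_focal_distance
    (r : ℝ → ℝ) (hr : ContDiff ℝ 2 r)
    (h0 : deriv r 0 = 0) (hπ : deriv r π = 0)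
    (hint : IntegrableOn
        (fun θ => (deriv (deriv r) θ - deriv r θ * (Real.cos θ / Real.sin θ)) / Real.sin θ)
        (Set.Ioo 0 π)) :
    ∫ θ in Set.Ioo 0 π,
        (deriv (deriv r) θ - deriv r θ * (Real.cos θ / Real.sin θ)) / Real.sin θ
      = -(deriv (deriv r) 0 + deriv (deriv r) π) ∧
    -(deriv (deriv r) 0 + deriv (deriv r) π)
      = (r 0 - (r 0 + deriv (deriv r) 0)) - (-(r π) + (r π + deriv (deriv r) π)) := by
  have hd : ∀ x, HasDerivAt (deriv r) (deriv (deriv r) x) x := by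
    intro x
    have h1 : ContDiff ℝ 1 (deriv r) := by
      have h2 : ContDiff ℝ (1 + 1) r := by simpa [one_add_one_eq_two] using hr
      exact (contDiff_succ_iff_deriv.1 h2).2.2
    exact (h1.differentiable one_ne_zero x).hasDerivAt
  refine ⟨?_, by ring⟩
  have t0 := tendsto_div_of_hasDerivAt (hd 0) (Real.hasDerivAt_sin 0) h0 Real.sin_zero (by simp)
  have tπ := tendsto_div_of_hasDerivAt (hd π) (Real.hasDerivAt_sin π) hπ Real.sin_pi (by simp)
  have key := intervalIntegral.integral_eq_sub_of_hasDerivAt_of_tendsto Real.pi_pos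
    (f := fun x => deriv r x / Real.sin x)
    (f' := fun θ => (deriv (deriv r) θ - deriv r θ * (Real.cos θ / Real.sin θ)) / Real.sin θ)
    (fun x hx => by
      have hs : Real.sin x ≠ 0 := (Real.sin_pos_of_mem_Ioo hx).ne'
      refine ((hd x).div (Real.hasDerivAt_sin x) hs).congr_deriv ?_
      field_simp)
    ((intervalIntegrable_iff_integrableOn_Ioo_of_le Real.pi_pos.le).2 hint)
    (t0.mono_left (nhdsWithin_mono _ fun x hx => ne_of_gt hx))
    (tπ.mono_left (nhdsWithin_mono _ fun x hx => ne_of_lt hx))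
  rw [intervalIntegral.integral_of_le Real.pi_pos.le, integral_Ioc_eq_integral_Ioo] at key
  rw [key, Real.cos_zero, Real.cos_pi]
  ring
end

section
/- Let n ∈ ℝ and let s : (0,π) → ℝ be twice continuously differentiable. Then for all θ ∈ (0,π): 𝓛ⁿₙ(s/sin^{n+2}θ) = s''(θ)/sin^{n+2}θ − (2n+3)·cos θ·s'(θ)/sin^{n+3}θ + 2(n+1)(1+cos²θ)·s(θ)/sin^{n+4}θ, where 𝓛ⁿₙ f = f'' + cot θ·f' + (n(n+1) − n²/sin²θ)·f. -/
open Real Set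

theorem sin_rpow_hasDerivAt (p x : ℝ) (hx : 0 < Real.sin x) :
    HasDerivAt (fun φ => Real.sin φ ^ p) (Real.cos x * p * Real.sin x ^ (p - 1)) x :=
  (Real.hasDerivAt_sin x).rpow_const (Or.inl hx.ne')

/-- Explicit expression of the Legendre operator applied to `s/sin^{n+2} θ`:
`𝓛ⁿₙ(s/sin^{n+2}θ) = s''/sin^{n+2}θ − (2n+3)·cos θ·s'/sin^{n+3}θ
  + 2(n+1)(1+cos²θ)·s/sin^{n+4}θ`. -/
theorem legendre_of_quotient
    (n : ℝ) (s : ℝ → ℝ) (hs : ContDiffOn ℝ 2 s (Set.Ioo 0 π)) :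
    ∀ θ ∈ Set.Ioo 0 π,
      deriv (deriv (fun φ => s φ / Real.sin φ ^ (n+2))) θ
        + (Real.cos θ / Real.sin θ) * deriv (fun φ => s φ / Real.sin φ ^ (n+2)) θ
        + (n*(n+1) - n^2 / Real.sin θ^2) * (s θ / Real.sin θ ^ (n+2))
      = deriv (deriv s) θ / Real.sin θ ^ (n+2)
        - (2*n+3) * Real.cos θ * deriv s θ / Real.sin θ ^ (n+3)
        + 2*(n+1)*(1 + Real.cos θ^2) * s θ / Real.sin θ ^ (n+4) := by
  intro θ hθ
  have hsin : ∀ x ∈ Set.Ioo 0 π, 0 < Real.sin x := fun x hx =>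
    Real.sin_pos_of_pos_of_lt_pi hx.1 hx.2
  have h1 : ∀ x ∈ Set.Ioo 0 π, HasDerivAt s (deriv s x) x := fun x hx =>
    ((hs.differentiableOn (by norm_num)).differentiableAt
      (isOpen_Ioo.mem_nhds hx)).hasDerivAt
  have h2 : HasDerivAt (deriv s) (deriv (deriv s) θ) θ := by
    have h := (contDiffOn_succ_iff_deriv_of_isOpen (n := 1) (isOpen_Ioo)).1
      (by simpa [one_add_one_eq_two] using hs)
    exact ((h.2.2.differentiableOn (by norm_num)).differentiableAt
      (isOpen_Ioo.mem_nhds hθ)).hasDerivAt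
  have hf : ∀ x ∈ Set.Ioo 0 π, HasDerivAt (fun φ => s φ / Real.sin φ ^ (n+2))
      (deriv s x * Real.sin x ^ (-(n+2))
        + s x * (Real.cos x * (-(n+2)) * Real.sin x ^ (-(n+2) - 1))) x := by
    intro x hx
    refine ((h1 x hx).mul (sin_rpow_hasDerivAt (-(n+2)) x (hsin x hx))).congr_of_eventuallyEq ?_
    filter_upwards [isOpen_Ioo.mem_nhds hx] with y hy
    simp only [Pi.mul_apply]
    rw [Real.rpow_neg (hsin y hy).le, div_eq_mul_inv]
  have hE : deriv (fun φ => s φ / Real.sin φ ^ (n+2)) =ᶠ[nhds θ] fun x =>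
      (deriv s x * Real.sin x ^ (-(n+2))
        + s x * (Real.cos x * (-(n+2)) * Real.sin x ^ (-(n+2) - 1))) := by
    filter_upwards [isOpen_Ioo.mem_nhds hθ] with y hy
    exact (hf y hy).deriv
  have hS := hsin θ hθ
  have hD := ((h2.mul (sin_rpow_hasDerivAt (-(n+2)) θ hS)).add
    ((h1 θ hθ).mul (((Real.hasDerivAt_cos θ).mul_const (-(n+2))).mul
      (sin_rpow_hasDerivAt (-(n+2) - 1) θ hS)))).congr_of_eventuallyEq hE
  rw [hD.deriv, (hf θ hθ).deriv]
  simp only [Pi.mul_apply]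
  have e0 : Real.sin θ ^ (-(n+2)) = (Real.sin θ ^ (n+2))⁻¹ := Real.rpow_neg hS.le _
  have e3 : Real.sin θ ^ (n+3) = Real.sin θ ^ (n+2) * Real.sin θ := by
    rw [← Real.rpow_add_one hS.ne']; congr 1; ring
  have e4 : Real.sin θ ^ (n+4) = Real.sin θ ^ (n+2) * Real.sin θ * Real.sin θ := by
    rw [← e3, ← Real.rpow_add_one hS.ne']; congr 1; ring
  rw [Real.rpow_sub_one hS.ne' (-(n+2) - 1), Real.rpow_sub_one hS.ne' (-(n+2)), e0, e3, e4]
  have hP : Real.sin θ ^ (n+2) ≠ 0 := (Real.rpow_pos_of_pos hS _).ne'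
  have hc : Real.cos θ ^ 2 = 1 - Real.sin θ ^ 2 := Real.cos_sq' θ
  generalize Real.sin θ ^ (n+2) = P at *
  have hS' := hS.ne'
  generalize Real.sin θ = S at *
  generalize Real.cos θ = C at *
  field_simp
  ring_nf
  simp only [hc]
  ring
end

section
/- Let n ∈ (−1,1), m > n + 3, and let s : (0,π) → ℝ be twice continuously differentiable such that for i = 0, 1, 2 there are constants c_i, d_i with s^{(i)}(θ)/sin^{m−i}θ → c_i as θ → 0 and s^{(i)}(θ)/sin^{m−i}θ → d_i as θ → π. Then 𝓛ⁿₙ(s/sin^{n+2}θ) ∈ L²_{sin θ}(0,π), and moreover s(θ)/sin²θ → 0 as θ → 0 and as θ → π. -/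
open Real Set Filter Topology MeasureTheory

theorem aux_bdd (f : ℝ → ℝ) (hf : ContinuousOn f (Set.Ioo 0 π)) (a b : ℝ)
    (h0 : Tendsto f (𝓝[Set.Ioo 0 π] 0) (𝓝 a)) (hp : Tendsto f (𝓝[Set.Ioo 0 π] π) (𝓝 b)) :
    ∃ C, 0 ≤ C ∧ ∀ x ∈ Set.Ioo 0 π, |f x| ≤ C := by
  rw [nhdsWithin_Ioo_eq_nhdsGT pi_pos] at h0
  rw [nhdsWithin_Ioo_eq_nhdsLT pi_pos] at hp
  have h := continuousOn_Icc_extendFrom_Ioo hf h0 hp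
  obtain ⟨C, hC⟩ := isCompact_Icc.exists_bound_of_continuousOn h
  have key : ∀ x ∈ Set.Ioo 0 π, |f x| ≤ C := by
    intro x hx
    have h1 := hC x (Ioo_subset_Icc_self hx)
    rwa [extendFrom_eq (by rw [closure_Ioo pi_pos.ne]; exact Ioo_subset_Icc_self hx)
      (hf x hx), Real.norm_eq_abs] at h1
  exact ⟨C, (abs_nonneg _).trans (key (π/2) ⟨by positivity, by linarith [pi_pos]⟩), key⟩

theorem aux_cont (q : ℝ) : ContinuousOn (fun x => Real.sin x ^ q) (Set.Ioo 0 π) :=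
  Real.continuous_sin.continuousOn.rpow_const
    (fun x hx => Or.inl (Real.sin_pos_of_mem_Ioo hx).ne')

theorem aux_int (q : ℝ) (hq : -1 < q) :
    IntegrableOn (fun x => Real.sin x ^ q) (Set.Ioo 0 π) := by
  set r := min q 0 with hr
  have hr1 : -1 < r := lt_min hq (by norm_num)
  have hr0 : r ≤ 0 := min_le_right _ _
  have i1 : IntegrableOn (fun x : ℝ => x ^ r) (Set.Ioo 0 π) := by
    have := intervalIntegral.intervalIntegrable_rpow' (a := 0) (b := π) hr1
    exact (intervalIntegrable_iff_integrableOn_Ioo_of_le pi_pos.le).1 this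
  have i2 : IntegrableOn (fun x : ℝ => (π - x) ^ r) (Set.Ioo 0 π) := by
    have := (intervalIntegral.intervalIntegrable_rpow' (a := 0) (b := π) hr1).comp_sub_left π
    simp only [sub_zero, sub_self] at this
    exact (intervalIntegrable_iff_integrableOn_Ioo_of_le pi_pos.le).1 this.symm
  have i3 := (i1.add i2).const_mul ((2/π) ^ r)
  refine Integrable.mono' i3 ((aux_cont q).aestronglyMeasurable measurableSet_Ioo) ?_
  refine (ae_restrict_mem measurableSet_Ioo).mono fun x hx => ?_
  have hs := Real.sin_pos_of_mem_Ioo hx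
  have hxp : 0 < π - x := by linarith [hx.2]
  have hx0 : 0 < x := hx.1
  rw [Real.norm_eq_abs, abs_of_nonneg (by positivity)]
  have e1 : Real.sin x ^ q ≤ Real.sin x ^ r :=
    Real.rpow_le_rpow_of_exponent_ge hs (Real.sin_le_one x) (min_le_left _ _)
  have a1 : 0 ≤ (2/π) ^ r * x ^ r := by positivity
  have a2 : 0 ≤ (2/π) ^ r * (π - x) ^ r := by positivity
  simp only [Pi.add_apply, mul_add]
  rcases le_total x (π/2) with h | h
  · have := Real.rpow_le_rpow_of_nonpos (by positivity) (Real.mul_le_sin hx0.le h) hr0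
    rw [Real.mul_rpow (by positivity) hx0.le] at this
    linarith
  · have := Real.rpow_le_rpow_of_nonpos (by positivity)
      (Real.mul_le_sin hxp.le (by linarith)) hr0
    rw [Real.mul_rpow (by positivity) hxp.le, Real.sin_pi_sub] at this
    linarith

theorem aux_lim (m c a : ℝ) (hm : 2 < m) (s : ℝ → ℝ) (ha : Real.sin a = 0)
    (h : Tendsto (fun θ => s θ / Real.sin θ ^ m) (𝓝[Set.Ioo 0 π] a) (𝓝 c)) :
    Tendsto (fun θ => s θ / Real.sin θ^2) (𝓝[Set.Ioo 0 π] a) (𝓝 0) := by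
  have h1 : Tendsto (fun θ => Real.sin θ ^ (m-2)) (𝓝[Set.Ioo 0 π] a) (𝓝 0) := by
    have : ContinuousAt (fun θ => Real.sin θ ^ (m-2)) a :=
      Real.continuous_sin.continuousAt.rpow_const (Or.inr (by linarith))
    have h2 := this.tendsto
    simp only [ha] at h2
    rw [Real.zero_rpow (by linarith)] at h2
    exact h2.mono_left nhdsWithin_le_nhds
  have h3 := h.mul h1
  rw [mul_zero] at h3
  refine h3.congr' ?_
  filter_upwards [self_mem_nhdsWithin] with x hx
  have hp := Real.sin_pos_of_mem_Ioo hx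
  rw [Real.rpow_sub hp, Real.rpow_two]
  have : Real.sin x ^ m ≠ 0 := by positivity
  field_simp

theorem aux_d1 (s : ℝ → ℝ) (q x s' : ℝ) (hx : x ∈ Set.Ioo 0 π) (h : HasDerivAt s s' x) :
    HasDerivAt (fun φ => s φ * Real.sin φ ^ q)
      (s' * Real.sin x ^ q + s x * (Real.cos x * q * Real.sin x ^ (q-1))) x :=
  h.mul ((Real.hasDerivAt_sin x).rpow_const (Or.inl (Real.sin_pos_of_mem_Ioo hx).ne'))

/-- If `s` is C² on `(0,π)` and `s^{(i)} ∼ c_i·sin^{m−i} θ` at `θ = 0` and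
`s^{(i)} ∼ d_i·sin^{m−i} θ` at `θ = π` for `i = 0,1,2` with `m > n+3` and `n ∈ (−1,1)`,
then `𝓛ⁿₙ(s/sin^{n+2}θ) ∈ L²_{sin θ}(0,π)` and `s/sin²θ → 0` at both poles. -/
theorem falloff_implies_flow_conditions
    (n m : ℝ) (hn : n ∈ Set.Ioo (-1:ℝ) 1) (hm : m > n + 3)
    (s : ℝ → ℝ) (hs : ContDiffOn ℝ 2 s (Set.Ioo 0 π))
    (c₀ c₁ c₂ d₀ d₁ d₂ : ℝ)
    (h00 : Tendsto (fun θ => s θ / Real.sin θ ^ m) (𝓝[Set.Ioo 0 π] 0) (𝓝 c₀))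
    (h10 : Tendsto (fun θ => deriv s θ / Real.sin θ ^ (m-1)) (𝓝[Set.Ioo 0 π] 0) (𝓝 c₁))
    (h20 : Tendsto (fun θ => deriv (deriv s) θ / Real.sin θ ^ (m-2))
      (𝓝[Set.Ioo 0 π] 0) (𝓝 c₂))
    (h0π : Tendsto (fun θ => s θ / Real.sin θ ^ m) (𝓝[Set.Ioo 0 π] π) (𝓝 d₀))
    (h1π : Tendsto (fun θ => deriv s θ / Real.sin θ ^ (m-1)) (𝓝[Set.Ioo 0 π] π) (𝓝 d₁))
    (h2π : Tendsto (fun θ => deriv (deriv s) θ / Real.sin θ ^ (m-2))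
      (𝓝[Set.Ioo 0 π] π) (𝓝 d₂)) :
    IntegrableOn
        (fun θ => (deriv (deriv (fun φ => s φ / Real.sin φ ^ (n+2))) θ
          + (Real.cos θ / Real.sin θ) * deriv (fun φ => s φ / Real.sin φ ^ (n+2)) θ
          + (n*(n+1) - n^2 / Real.sin θ^2) * (s θ / Real.sin θ ^ (n+2)))^2 * Real.sin θ)
        (Set.Ioo 0 π) ∧
      Tendsto (fun θ => s θ / Real.sin θ^2) (𝓝[Set.Ioo 0 π] 0) (𝓝 0) ∧
      Tendsto (fun θ => s θ / Real.sin θ^2) (𝓝[Set.Ioo 0 π] π) (𝓝 0) := by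
  obtain ⟨hn1, hn2⟩ := hn
  refine ⟨?_, aux_lim m c₀ 0 (by linarith) s Real.sin_zero h00,
    aux_lim m d₀ π (by linarith) s Real.sin_pi h0π⟩
  have hs1 : ContDiffOn ℝ 1 (deriv s) (Set.Ioo 0 π) :=
    hs.deriv_of_isOpen isOpen_Ioo (by norm_num)
  have k0 : ContinuousOn s (Set.Ioo 0 π) := hs.continuousOn
  have k1 : ContinuousOn (deriv s) (Set.Ioo 0 π) := hs1.continuousOn
  have k2 : ContinuousOn (deriv (deriv s)) (Set.Ioo 0 π) :=
    hs1.continuousOn_deriv_of_isOpen isOpen_Ioo (by norm_num)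
  have D0 : ∀ x ∈ Set.Ioo 0 π, HasDerivAt s (deriv s x) x := fun x hx =>
    ((hs.differentiableOn (by norm_num)).differentiableAt (isOpen_Ioo.mem_nhds hx)).hasDerivAt
  have D1 : ∀ x ∈ Set.Ioo 0 π, HasDerivAt (deriv s) (deriv (deriv s) x) x := fun x hx =>
    ((hs1.differentiableOn (by norm_num)).differentiableAt (isOpen_Ioo.mem_nhds hx)).hasDerivAt
  have nz : ∀ q : ℝ, ∀ x ∈ Set.Ioo 0 π, Real.sin x ^ q ≠ 0 := fun q x hx =>
    (Real.rpow_pos_of_pos (Real.sin_pos_of_mem_Ioo hx) q).ne'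
  set A := fun θ => deriv (deriv s) θ / Real.sin θ ^ (m-2) with hA
  set B := fun θ => deriv s θ / Real.sin θ ^ (m-1) with hB
  set C := fun θ => s θ / Real.sin θ ^ m with hC
  have cA : ContinuousOn A (Set.Ioo 0 π) := k2.div (aux_cont _) (nz _)
  have cB : ContinuousOn B (Set.Ioo 0 π) := k1.div (aux_cont _) (nz _)
  have cC : ContinuousOn C (Set.Ioo 0 π) := k0.div (aux_cont _) (nz _)
  set G := fun θ => A θ + (1 - 2*(n+2)) * Real.cos θ * B θ
    + ((n+2)^2 * Real.cos θ^2 + (n+2) * Real.sin θ^2 + n*(n+1) * Real.sin θ^2 - n^2) * C θ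
    with hG
  have cG : ContinuousOn G (Set.Ioo 0 π) := by
    have l1 : Continuous (fun θ : ℝ => (1 - 2*(n+2)) * Real.cos θ) := by fun_prop
    have l2 : Continuous (fun θ : ℝ => (n+2)^2 * Real.cos θ^2 + (n+2) * Real.sin θ^2
      + n*(n+1) * Real.sin θ^2 - n^2) := by fun_prop
    exact (cA.add (l1.continuousOn.mul cB)).add (l2.continuousOn.mul cC)
  have tG : ∀ a x y z : ℝ, Tendsto A (𝓝[Set.Ioo 0 π] a) (𝓝 x) →
      Tendsto B (𝓝[Set.Ioo 0 π] a) (𝓝 y) → Tendsto C (𝓝[Set.Ioo 0 π] a) (𝓝 z) →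
      ∃ w, Tendsto G (𝓝[Set.Ioo 0 π] a) (𝓝 w) := by
    intro a x y z hx hy hz
    have l1 : Continuous (fun θ : ℝ => (1 - 2*(n+2)) * Real.cos θ) := by fun_prop
    have l2 : Continuous (fun θ : ℝ => (n+2)^2 * Real.cos θ^2 + (n+2) * Real.sin θ^2
      + n*(n+1) * Real.sin θ^2 - n^2) := by fun_prop
    exact ⟨_, (hx.add (((l1.tendsto a).mono_left nhdsWithin_le_nhds).mul hy)).add
      (((l2.tendsto a).mono_left nhdsWithin_le_nhds).mul hz)⟩
  obtain ⟨w0, hw0⟩ := tG 0 _ _ _ h20 h10 h00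
  obtain ⟨w1, hw1⟩ := tG π _ _ _ h2π h1π h0π
  obtain ⟨M, hM0, hM⟩ := aux_bdd G cG w0 w1 hw0 hw1
  have hq : -1 < 2*(m-n-4)+1 := by linarith
  have I : IntegrableOn (fun θ => G θ^2 * Real.sin θ ^ (2*(m-n-4)+1)) (Set.Ioo 0 π) := by
    refine Integrable.mono' ((aux_int _ hq).const_mul (M^2))
      (((cG.pow 2).mul (aux_cont _)).aestronglyMeasurable measurableSet_Ioo) ?_
    refine (ae_restrict_mem measurableSet_Ioo).mono fun x hx => ?_
    have hp := Real.sin_pos_of_mem_Ioo hx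
    rw [Real.norm_eq_abs, abs_of_nonneg (by positivity)]
    gcongr ?_ * _
    exact sq_le_sq' (abs_le.1 (hM x hx)).1 (abs_le.1 (hM x hx)).2
  refine I.congr_fun (fun x hx => ?_) measurableSet_Ioo
  have hp := Real.sin_pos_of_mem_Ioo hx
  set u := fun φ => s φ / Real.sin φ ^ (n+2) with hu
  have eu : ∀ y ∈ Set.Ioo 0 π, u y = s y * Real.sin y ^ (-(n+2)) := fun y hy => by
    simp only [hu]
    rw [Real.rpow_neg (Real.sin_pos_of_mem_Ioo hy).le, div_eq_mul_inv]
  have eu1 : ∀ y ∈ Set.Ioo 0 π, HasDerivAt u (deriv s y * Real.sin y ^ (-(n+2))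
      + s y * (Real.cos y * (-(n+2)) * Real.sin y ^ (-(n+2)-1))) y := fun y hy =>
    (aux_d1 s _ y _ hy (D0 y hy)).congr_of_eventuallyEq
      (Filter.eventually_of_mem (isOpen_Ioo.mem_nhds hy) eu)
  have eu2 := (aux_d1 (deriv s) (-(n+2)) x _ hx (D1 x hx)).add
    ((D0 x hx).mul (((Real.hasDerivAt_cos x).mul_const (-(n+2))).mul
      ((Real.hasDerivAt_sin x).rpow_const (p := -(n+2)-1) (Or.inl hp.ne'))))
  have eu3 := (eu2.congr_of_eventuallyEq (Filter.eventually_of_mem (isOpen_Ioo.mem_nhds hx)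
    (fun y hy => (eu1 y hy).deriv))).deriv
  have main : deriv (deriv u) x + Real.cos x / Real.sin x * deriv u x
      + (n*(n+1) - n^2 / Real.sin x^2) * u x = G x * Real.sin x ^ (m-n-4) := by
    rw [eu3, (eu1 x hx).deriv, eu x hx]
    simp only [hG, hA, hB, hC, Pi.mul_apply]
    have e4 : Real.sin x ^ (-(n+2)) = Real.sin x ^ (-(n+4)) * Real.sin x ^ 2 := by
      rw [← Real.rpow_natCast, ← Real.rpow_add hp]; congr 1; push_cast; ring
    have e5 : Real.sin x ^ (-(n+2)-1) = Real.sin x ^ (-(n+4)) * Real.sin x := by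
      rw [← Real.rpow_add_one hp.ne']; congr 1; ring
    have e6 : Real.sin x ^ (-(n+2)-1-1) = Real.sin x ^ (-(n+4)) := by
      congr 1; ring
    have e7 : Real.sin x ^ (m-n-4) = Real.sin x ^ m * Real.sin x ^ (-(n+4)) := by
      rw [← Real.rpow_add hp]; congr 1; ring
    have hm0 := nz m x hx
    rw [e4, e5, e6, e7, Real.rpow_sub_one hp.ne', Real.rpow_sub hp, Real.rpow_two]
    field_simp
    ring
  change G x^2 * Real.sin x ^ (2*(m-n-4)+1) = (deriv (deriv u) x + Real.cos x / Real.sin x * deriv u x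
      + (n*(n+1) - n^2 / Real.sin x^2) * u x)^2 * Real.sin x
  rw [main]
  rw [mul_pow, mul_assoc, Real.rpow_add_one hp.ne', mul_comm (2:ℝ), Real.rpow_mul hp.le,
    Real.rpow_two]
end

section
/- Let n ∈ (−1,1) and let s be twice continuously differentiable on [0,δ) for some δ > 0 with s(0) = 0 and s'(0) = 0. Then lim_{θ→0} [ s'(θ)/sin θ − 2(n+1)·cos θ·s(θ)/sin²θ ] = −n·s''(0); equivalently, lim_{θ→0} sin^{2n+1}θ·(d/dθ)(s(θ)/sin^{2n+2}θ) = −n·s''(0). In particular, this boundary limit vanishes if and only if n·lim_{θ→0}(s(θ)/sin²θ) = 0. -/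
open Real Set Filter Topology

/-- Boundary limit at the pole `θ = 0` for a C² astigmatism with `s(0) = s'(0) = 0`:
`lim_{θ→0} [s'/sin θ − 2(n+1)·cos θ·s/sin²θ] = −n·s''(0)`, equivalently
`lim_{θ→0} sin^{2n+1}θ·(d/dθ)(s/sin^{2n+2}θ) = −n·s''(0)`; in particular this boundary
limit vanishes iff `n·lim_{θ→0}(s/sin²θ) = 0`. -/
theorem boundary_limit_at_pole
    (n δ : ℝ) (hn : n ∈ Set.Ioo (-1:ℝ) 1) (hδ : 0 < δ)
    (s s' s'' : ℝ → ℝ)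
    (hs' : ∀ θ ∈ Set.Ico 0 δ, HasDerivWithinAt s (s' θ) (Set.Ico 0 δ) θ)
    (hs'' : ∀ θ ∈ Set.Ico 0 δ, HasDerivWithinAt s' (s'' θ) (Set.Ico 0 δ) θ)
    (hcont : ContinuousOn s'' (Set.Ico 0 δ))
    (h0 : s 0 = 0) (h1 : s' 0 = 0) :
    Tendsto (fun θ => s' θ / Real.sin θ - 2*(n+1) * Real.cos θ * s θ / Real.sin θ^2)
        (𝓝[Set.Ioo 0 δ] 0) (𝓝 (-n * s'' 0)) ∧
    Tendsto (fun θ =>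
        Real.sin θ ^ (2*n+1) * deriv (fun φ => s φ / Real.sin φ ^ (2*n+2)) θ)
        (𝓝[Set.Ioo 0 δ] 0) (𝓝 (-n * s'' 0)) ∧
    (∀ L : ℝ, Tendsto (fun θ => s θ / Real.sin θ^2) (𝓝[Set.Ioo 0 δ] 0) (𝓝 L) →
      (Tendsto (fun θ =>
          Real.sin θ ^ (2*n+1) * deriv (fun φ => s φ / Real.sin φ ^ (2*n+2)) θ)
          (𝓝[Set.Ioo 0 δ] 0) (𝓝 0) ↔ n * L = 0)) := by
  have hl : 𝓝[Set.Ioo 0 δ] (0:ℝ) = 𝓝[>] 0 := nhdsWithin_Ioo_eq_nhdsGT hδ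
  rw [hl]
  have hmem0 : (0:ℝ) ∈ Set.Ico 0 δ := ⟨le_refl _, hδ⟩
  have hdm : ∀ᶠ θ in 𝓝[>] (0:ℝ), θ ∈ Set.Ioo 0 δ := Ioo_mem_nhdsGT hδ
  have hpi : ∀ᶠ θ in 𝓝[>] (0:ℝ), θ ∈ Set.Ioo 0 Real.pi := Ioo_mem_nhdsGT Real.pi_pos
  have hds : ∀ θ ∈ Set.Ioo 0 δ, HasDerivAt s (s' θ) θ := fun θ hθ =>
    (hs' θ ⟨hθ.1.le, hθ.2⟩).hasDerivAt (Ico_mem_nhds hθ.1 hθ.2)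
  have hA : Tendsto (fun θ => s' θ / θ) (𝓝[>] 0) (𝓝 (s'' 0)) := by
    have h := (hs'' 0 hmem0).mono (Set.Ioo_subset_Ico_self)
    rw [hasDerivWithinAt_iff_tendsto_slope' (by simp), hl] at h
    refine h.congr fun θ => ?_
    simp [slope_def_field, h1]
  have hsin : Tendsto (fun θ => Real.sin θ / θ) (𝓝[>] 0) (𝓝 1) := by
    have h := (Real.hasDerivAt_sin 0).hasDerivWithinAt (s := Set.Ioi 0)
    rw [hasDerivWithinAt_iff_tendsto_slope' (by simp), Real.cos_zero] at h
    refine h.congr fun θ => ?_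
    simp [slope_def_field]
  have hcos : Tendsto Real.cos (𝓝[>] 0) (𝓝 1) := by
    have h := Real.continuous_cos.tendsto 0
    rw [Real.cos_zero] at h
    exact h.mono_left nhdsWithin_le_nhds
  have hs0 : Tendsto s (𝓝[>] 0) (𝓝 0) := by
    have h := (hs' 0 hmem0).continuousWithinAt.mono (Set.Ioo_subset_Ico_self)
    unfold ContinuousWithinAt at h
    rwa [hl, h0] at h
  have hB : Tendsto (fun θ => s θ / θ ^ 2) (𝓝[>] 0) (𝓝 (s'' 0 / 2)) := by
    refine HasDerivAt.lhopital_zero_nhdsGT (f' := s') (g' := fun θ => 2 * θ) ?_ ?_ ?_ hs0 ?_ ?_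
    · filter_upwards [hdm] with θ hθ using hds θ hθ
    · exact Eventually.of_forall fun θ => by simpa using hasDerivAt_pow 2 θ
    · filter_upwards [hdm] with θ hθ
      have := hθ.1
      positivity
    · have h := (continuous_pow 2 (M := ℝ)).tendsto 0
      rw [zero_pow two_ne_zero] at h
      exact h.mono_left nhdsWithin_le_nhds
    · refine (hA.div_const 2).congr fun θ => ?_
      rw [div_div, mul_comm]
  have hC : Tendsto (fun θ => s θ / Real.sin θ ^ 2) (𝓝[>] 0) (𝓝 (s'' 0 / 2)) := by
    have h := hB.div (hsin.pow 2) (by norm_num)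
    rw [one_pow, div_one] at h
    refine h.congr' ?_
    filter_upwards [hdm, hpi] with θ hθ hp
    have h2 := hθ.1.ne'
    have h3 := (Real.sin_pos_of_mem_Ioo hp).ne'
    simp only [Pi.div_apply, Pi.pow_apply]
    field_simp
  have hD : Tendsto (fun θ => s' θ / Real.sin θ) (𝓝[>] 0) (𝓝 (s'' 0)) := by
    have h := hA.div hsin (by norm_num)
    rw [div_one] at h
    refine h.congr' ?_
    filter_upwards [hdm, hpi] with θ hθ hp
    have h2 := hθ.1.ne'
    have h3 := (Real.sin_pos_of_mem_Ioo hp).ne'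
    simp only [Pi.div_apply]
    field_simp
  have hE : Tendsto (fun θ => s' θ / Real.sin θ - 2*(n+1) * Real.cos θ * s θ / Real.sin θ^2)
      (𝓝[>] 0) (𝓝 (-n * s'' 0)) := by
    have h := hD.sub ((hcos.const_mul (2*(n+1))).mul hC)
    have e : s'' 0 - 2*(n+1) * 1 * (s'' 0 / 2) = -n * s'' 0 := by ring
    rw [e] at h
    refine h.congr fun θ => ?_
    rw [mul_div_assoc]
  have hF : Tendsto (fun θ =>
      Real.sin θ ^ (2*n+1) * deriv (fun φ => s φ / Real.sin φ ^ (2*n+2)) θ)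
      (𝓝[>] 0) (𝓝 (-n * s'' 0)) := by
    refine hE.congr' ?_
    filter_upwards [hdm, hpi] with θ hθ hp
    have h3 := Real.sin_pos_of_mem_Ioo hp
    have hr := (Real.hasDerivAt_sin θ).rpow_const (p := 2*n+2) (Or.inl h3.ne')
    have hq := (hds θ hθ).fun_div hr (Real.rpow_pos_of_pos h3 _).ne'
    rw [hq.deriv]
    have e1 : Real.sin θ ^ (2*n+2) = Real.sin θ ^ (2*n+1) * Real.sin θ := by
      rw [← Real.rpow_add_one h3.ne']; congr 1; ring
    have e2 : (2*n+2-1 : ℝ) = 2*n+1 := by ring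
    rw [e2, e1]
    have h4 := (Real.rpow_pos_of_pos h3 (2*n+1)).ne'
    have h5 := h3.ne'
    generalize Real.sin θ ^ (2*n+1) = X at *
    field_simp
  refine ⟨hE, hF, fun L hL => ?_⟩
  have hLe : L = s'' 0 / 2 := tendsto_nhds_unique hL hC
  constructor
  · intro h
    have := tendsto_nhds_unique h hF
    rw [hLe]; linarith
  · intro h
    have e : -n * s'' 0 = 0 := by rw [hLe] at h; linarith
    rwa [e] at hF
end
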